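/- There exists an irrational x ∈ (0,1) that is normal for the continued fraction transformation: for every m ≥ 1 and every finite word d_1 d_2 … d_m of positive integers, the frequency lim_{N→∞} (1/N)·#{0 ≤ n < N : a_{n+1}(x) = d_1, …, a_{n+m}(x) = d_m} exists and equals the Gauss measure of the cylinder set {y ∈ (0,1) irrational : a_1(y) = d_1, …, a_m(y) = d_m} (Adler–Keane–Smorodinsky). -/

import Mathlib

open Filter MeasureTheory Topology
open scoped Classical

/-- The Gauss map `T x = 1/x mod 1`. -/
noncomputable def gaussMap (x : ℝ) : ℝ := Int.fract x⁻¹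

/-- `cfa n x` is the partial quotient `a_{n+1}(x)` of the regular continued fraction expansion
of `x`, generated by the Gauss map: `a_1(x) = ⌊1/x⌋` and `a_{k+1}(x) = a_k (T x)`. -/
noncomputable def cfa : ℕ → ℝ → ℕ
  | 0, x => ⌊x⁻¹⌋₊
  | n + 1, x => cfa n (gaussMap x)

/-- The Gauss measure `μ(A) = (1/log 2) ∫_A dx/(1+x)` on `(0,1)`. -/
noncomputable def gaussMeasure : Measure ℝ :=
  (volume.restrict (Set.Ioo (0 : ℝ) 1)).withDensity
    fun x => ENNReal.ofReal ((Real.log 2)⁻¹ * (1 + x)⁻¹)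

lemma sel_step {Ω ι : Type*} [MeasurableSpace Ω] [Countable ι] (μ : Measure Ω)
    [IsProbabilityMeasure μ] (G : Set Ω) (hG : μ Gᶜ = 0) (w : ι → ℝ) (hw : ∀ e, 0 ≤ w e)
    (hws : Summable w) (X : ι → Ω → ℝ) (hX : ∀ e, Measurable (X e)) (L : ℝ)
    (hXL : ∀ e ω, |X e ω| ≤ L) (hX0 : ∀ e, ∫ ω, X e ω ∂μ = 0) (D : ι → ℝ) (B : ℝ)
    (hD : ∀ e, |D e| ≤ B) :
    ∃ ω ∈ G, ∑' e, w e * (D e + X e ω) ^ 2 ≤ ∑' e, w e * D e ^ 2 + L ^ 2 * ∑' e, w e := by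
  have hbd : ∀ e ω, ‖w e * D e * X e ω‖ ≤ w e * (B * L) := by
    intro e ω
    rw [Real.norm_eq_abs, abs_mul, abs_mul, abs_of_nonneg (hw e), mul_assoc]
    refine mul_le_mul_of_nonneg_left ?_ (hw e)
    exact mul_le_mul (hD e) (hXL e ω) (abs_nonneg _) ((abs_nonneg _).trans (hD e))
  have hint : ∀ e, Integrable (fun ω => w e * D e * X e ω) μ := fun e =>
    Integrable.of_bound ((hX e).const_mul _).aestronglyMeasurable _ (ae_of_all _ (hbd e))
  have hsumn : Summable fun e => ∫ ω, ‖w e * D e * X e ω‖ ∂μ := by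
    refine Summable.of_nonneg_of_le (fun e => integral_nonneg fun ω => norm_nonneg _) (fun e => ?_)
      (hws.mul_right (B * L))
    calc ∫ ω, ‖w e * D e * X e ω‖ ∂μ ≤ ∫ ω, w e * (B * L) ∂μ :=
          integral_mono (hint e).norm (integrable_const _) (hbd e)
      _ = _ := by simp
  have hS := hasSum_integral_of_summable_integral_norm hint hsumn
  have h0 : ∫ ω, ∑' e, w e * D e * X e ω ∂μ = 0 := by
    refine hS.unique ?_
    simp only [integral_const_mul, hX0, mul_zero]
    exact hasSum_zero
  have hfi : Integrable (fun ω => ∑' e, w e * D e * X e ω) μ := by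
    obtain ⟨en⟩ := nonempty_encodable ι
    have hm : Measurable fun ω => ∑' e, w e * D e * X e ω :=
      Measurable.tsum (fun e => (hX e).const_mul _)
    refine Integrable.of_bound hm.aestronglyMeasurable (∑' e, w e * (B * L)) (ae_of_all _ fun ω => ?_)
    exact tsum_of_norm_bounded (hws.mul_right (B * L)).hasSum (fun e => hbd e ω)
  obtain ⟨ω, hω, hle⟩ := exists_notMem_null_le_integral hfi hG
  refine ⟨ω, by simpa using hω, ?_⟩
  rw [h0] at hle
  have s1 : Summable fun e => w e * D e ^ 2 := by
    refine Summable.of_nonneg_of_le (fun e => mul_nonneg (hw e) (sq_nonneg _)) (fun e => ?_)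
      (hws.mul_right (B ^ 2))
    refine mul_le_mul_of_nonneg_left ?_ (hw e)
    exact sq_le_sq' (abs_le.1 (hD e)).1 (abs_le.1 (hD e)).2
  have s2 : Summable fun e => w e * D e * X e ω :=
    Summable.of_norm_bounded (hws.mul_right (B * L)) (fun e => hbd e ω)
  have b3 : ∀ e, w e * X e ω ^ 2 ≤ w e * L ^ 2 := fun e =>
    mul_le_mul_of_nonneg_left (sq_le_sq' (abs_le.1 (hXL e ω)).1 (abs_le.1 (hXL e ω)).2) (hw e)
  have s3 : Summable fun e => w e * X e ω ^ 2 :=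
    Summable.of_nonneg_of_le (fun e => mul_nonneg (hw e) (sq_nonneg _)) b3 (hws.mul_right _)
  have e1 : ∑' e, w e * (D e + X e ω) ^ 2
      = ∑' e, w e * D e ^ 2 + 2 * ∑' e, w e * D e * X e ω + ∑' e, w e * X e ω ^ 2 := by
    rw [← tsum_mul_left, ← s1.tsum_add (s2.mul_left 2), ← (s1.add (s2.mul_left 2)).tsum_add s3]
    congr 1; ext e; ring
  have e2 : ∑' e, w e * X e ω ^ 2 ≤ L ^ 2 * ∑' e, w e := by
    rw [mul_comm, ← tsum_mul_right]
    exact s3.tsum_le_tsum b3 (hws.mul_right _)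
  rw [e1]; linarith

lemma selection {Ω ι : Type*} [MeasurableSpace Ω] [Countable ι] (μ : Measure Ω)
    [IsProbabilityMeasure μ] (G : Set Ω) (hG : μ Gᶜ = 0) (X : ℕ → ι → Ω → ℝ)
    (hX : ∀ k e, Measurable (X k e))
    (hXL : ∀ k e ω, |X k e ω| ≤ (k + 1 : ℝ)) (hX0 : ∀ k e, ∫ ω, X k e ω ∂μ = 0) :
    ∃ ω : ℕ → Ω, (∀ k, ω k ∈ G) ∧ ∀ e, ∃ C : ℝ, 0 ≤ C ∧ ∀ k : ℕ,
      (∑ i ∈ Finset.range k, X i e (ω i)) ^ 2 ≤ C * (k : ℝ) ^ 3 := by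
  obtain ⟨en⟩ := nonempty_encodable ι
  let w : ι → ℝ := fun e => (1 / 2 : ℝ) ^ (Encodable.encode e)
  have hwpos : ∀ e, 0 < w e := fun e => by positivity
  have hws : Summable w :=
    summable_geometric_two.comp_injective Encodable.encode_injective
  have step : ∀ k : ℕ, ∀ D : ι → ℝ, ∃ ω ∈ G, (∃ B, ∀ e, |D e| ≤ B) →
      ∑' e, w e * (D e + X k e ω) ^ 2 ≤ ∑' e, w e * D e ^ 2 + (k + 1 : ℝ) ^ 2 * ∑' e, w e := by
    intro k D
    by_cases hB : ∃ B, ∀ e, |D e| ≤ B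
    · obtain ⟨B, hB'⟩ := hB
      obtain ⟨ω, h1, h2⟩ := sel_step μ G hG w (fun e => (hwpos e).le) hws (X k) (hX k) (k + 1)
        (hXL k) (hX0 k) D B hB'
      exact ⟨ω, h1, fun _ => h2⟩
    · have hne : G.Nonempty := by
        by_contra h
        rw [Set.not_nonempty_iff_eq_empty] at h
        simp [h] at hG
      obtain ⟨ω, h1⟩ := hne
      exact ⟨ω, h1, fun h => absurd h hB⟩
  choose g hgG hg using step
  let D : ℕ → ι → ℝ := fun k => Nat.rec (fun _ => 0) (fun k d e => d e + X k e (g k d)) k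
  have hDs : ∀ k e, D (k + 1) e = D k e + X k e (g k (D k)) := fun k e => rfl
  have hDsum : ∀ k e, D k e = ∑ i ∈ Finset.range k, X i e (g i (D i)) := by
    intro k e
    induction k with
    | zero => simp [D]
    | succ k ih => rw [hDs, ih, Finset.sum_range_succ]
  have hDB : ∀ k, ∃ B, ∀ e, |D k e| ≤ B := by
    intro k
    induction k with
    | zero => exact ⟨0, fun e => by simp [D]⟩
    | succ k ih =>
      obtain ⟨B, hB⟩ := ih
      refine ⟨B + (k + 1), fun e => ?_⟩
      rw [hDs]
      exact (abs_add_le _ _).trans (add_le_add (hB e) (hXL _ _ _))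
  have hW : 0 ≤ ∑' e, w e := tsum_nonneg fun e => (hwpos e).le
  have hPhi : ∀ k : ℕ, ∑' e, w e * D k e ^ 2 ≤ (k : ℝ) ^ 3 * ∑' e, w e := by
    intro k
    induction k with
    | zero => simp [D]
    | succ k ih =>
      have h := hg k (D k) (hDB k)
      simp only [hDs]
      refine h.trans ?_
      have : (k : ℝ) ^ 3 + (k + 1) ^ 2 ≤ ((k + 1 : ℕ) : ℝ) ^ 3 := by
        push_cast
        have : (0 : ℝ) ≤ k := by positivity
        nlinarith [sq_nonneg (k : ℝ)]
      nlinarith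
  refine ⟨fun k => g k (D k), fun k => hgG _ _, fun e => ⟨(w e)⁻¹ * ∑' e, w e,
    mul_nonneg (inv_nonneg.2 (hwpos e).le) hW, fun k => ?_⟩⟩
  rw [← hDsum]
  obtain ⟨B, hB⟩ := hDB k
  have s1 : Summable fun e => w e * D k e ^ 2 := by
    refine Summable.of_nonneg_of_le (fun e => mul_nonneg (hwpos e).le (sq_nonneg _)) (fun e => ?_)
      (hws.mul_right (B ^ 2))
    refine mul_le_mul_of_nonneg_left ?_ (hwpos e).le
    exact sq_le_sq' (abs_le.1 (hB e)).1 (abs_le.1 (hB e)).2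
  have h1 := s1.le_tsum e (fun j _ => mul_nonneg (hwpos j).le (sq_nonneg _))
  have h2 := h1.trans (hPhi k)
  have := mul_le_mul_of_nonneg_left h2 (inv_nonneg.2 (hwpos e).le)
  rw [inv_mul_cancel_left₀ (hwpos e).ne'] at this
  linarith

/-- Nested images of the unit interval under the inverse branches. -/
def nest : ℕ → (ℕ → ℕ) → Set ℝ
  | 0, _ => Set.Icc 0 1
  | n + 1, a => (fun t : ℝ => ((a 0 : ℝ) + t)⁻¹) '' nest n (fun k => a (k + 1))

lemma nest_sub (n : ℕ) : ∀ (a : ℕ → ℕ), (∀ k, 0 < a k) → nest n a ⊆ Set.Icc 0 1 := by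
  induction n with
  | zero => intro a _; exact subset_rfl
  | succ n ih =>
    rintro a ha _ ⟨t, ht, rfl⟩
    have h := ih _ (fun k => ha (k + 1)) ht
    have h1 : (1 : ℝ) ≤ a 0 := by exact_mod_cast ha 0
    have h2 : (1 : ℝ) ≤ a 0 + t := by linarith [h.1]
    exact ⟨by positivity, inv_le_one_of_one_le₀ h2⟩

lemma nest_anti (n : ℕ) : ∀ (a : ℕ → ℕ), (∀ k, 0 < a k) → nest (n + 1) a ⊆ nest n a := by
  induction n with
  | zero => intro a ha; exact nest_sub 1 a ha
  | succ n ih =>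
    intro a ha
    exact Set.image_mono (ih _ (fun k => ha (k + 1)))

lemma nest_compact (n : ℕ) : ∀ (a : ℕ → ℕ), (∀ k, 0 < a k) → IsCompact (nest n a) := by
  induction n with
  | zero => intro a _; exact isCompact_Icc
  | succ n ih =>
    intro a ha
    refine (ih _ (fun k => ha (k + 1))).image_of_continuousOn ?_
    refine ContinuousOn.inv₀ (by fun_prop) ?_
    intro t ht
    have h := nest_sub n _ (fun k => ha (k + 1)) ht
    have h1 : (1 : ℝ) ≤ a 0 := by exact_mod_cast ha 0
    have : (0 : ℝ) < a 0 + t := by linarith [h.1]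
    exact this.ne'

lemma nest_nonempty (n : ℕ) : ∀ (a : ℕ → ℕ), (nest n a).Nonempty := by
  induction n with
  | zero => intro a; exact ⟨0, by simp [nest]⟩
  | succ n ih => intro a; exact (ih _).image _

/-- membership in all nested sets -/
def InNest (a : ℕ → ℕ) (x : ℝ) : Prop := ∀ n, x ∈ nest n a

lemma inNest_tail {a : ℕ → ℕ} {x : ℝ} (h : InNest a x) :
    InNest (fun k => a (k + 1)) (x⁻¹ - a 0) := by
  intro n
  obtain ⟨t, ht, rfl⟩ := h (n + 1)
  simpa using ht

lemma inNest_pos {a : ℕ → ℕ} (ha : ∀ k, 0 < a k) {x : ℝ} (h : InNest a x) : 0 < x := by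
  obtain ⟨t, ht, rfl⟩ := h 1
  have h1 : (1 : ℝ) ≤ a 0 := by exact_mod_cast ha 0
  have := (nest_sub 0 _ (fun k => ha (k + 1)) ht).1
  show (0 : ℝ) < ((a 0 : ℝ) + t)⁻¹
  positivity

lemma inNest_lt {a : ℕ → ℕ} (ha : ∀ k, 0 < a k) {x : ℝ} (h : InNest a x) : x < 1 := by
  have h0 := inNest_pos (fun k => ha (k + 1)) (inNest_tail h)
  have h1 : (1 : ℝ) ≤ a 0 := by exact_mod_cast ha 0
  have hx := inNest_pos ha h
  have : 1 < x⁻¹ := by linarith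
  exact (one_lt_inv₀ hx).1 this

lemma inNest_step {a : ℕ → ℕ} (ha : ∀ k, 0 < a k) {x : ℝ} (h : InNest a x) :
    cfa 0 x = a 0 ∧ gaussMap x = x⁻¹ - a 0 := by
  have h0 := inNest_pos (fun k => ha (k + 1)) (inNest_tail h)
  have h1 := inNest_lt (fun k => ha (k + 1)) (inNest_tail h)
  constructor
  · show ⌊x⁻¹⌋₊ = a 0
    rw [Nat.floor_eq_iff (inv_nonneg.2 (inNest_pos ha h).le)]
    constructor <;> linarith
  · unfold gaussMap
    rw [Int.fract_eq_iff]
    exact ⟨h0.le, h1, (a 0 : ℤ), by simp⟩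

lemma inNest_cfa (n : ℕ) : ∀ {a : ℕ → ℕ} (_ : ∀ k, 0 < a k) {x : ℝ} (_ : InNest a x),
    cfa n x = a n := by
  induction n with
  | zero => intro a ha x h; exact (inNest_step ha h).1
  | succ n ih =>
    intro a ha x h
    show cfa n (gaussMap x) = _
    rw [(inNest_step ha h).2]
    exact ih (fun k => ha (k + 1)) (inNest_tail h)

lemma inNest_not_rat (q : ℕ) : ∀ {a : ℕ → ℕ} (_ : ∀ k, 0 < a k) {x : ℝ} (_ : InNest a x) (p : ℕ),
    0 < q → x ≠ (p : ℝ) / q := by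
  induction q using Nat.strong_induction_on with
  | _ q ih =>
    intro a ha x h p hq hx
    have hx0 := inNest_pos ha h
    have hx1 := inNest_lt ha h
    have hqr : (0 : ℝ) < q := by exact_mod_cast hq
    have hp : 0 < p := by
      rcases Nat.eq_zero_or_pos p with h | h
      · subst h; simp at hx; linarith
      · exact h
    have hpr : (0 : ℝ) < p := by exact_mod_cast hp
    have hpq : p < q := by
      rw [hx, div_lt_one hqr] at hx1
      exact_mod_cast hx1
    have ht := inNest_tail h
    have ht0 := inNest_pos (fun k => ha (k + 1)) ht
    have he : x⁻¹ - a 0 = ((q : ℝ) - a 0 * p) / p := by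
      rw [hx, inv_div]; field_simp
    have hle : a 0 * p ≤ q := by
      rw [he] at ht0
      have := (div_pos_iff_of_pos_right hpr).1 ht0
      have : (a 0 * p : ℝ) ≤ q := by linarith
      exact_mod_cast this
    refine ih p hpq (fun k => ha (k + 1)) ht (q - a 0 * p) hp ?_
    rw [he]; push_cast [hle]; rfl

lemma exists_of_digits (a : ℕ → ℕ) (ha : ∀ k, 0 < a k) :
    ∃ x : ℝ, x ∈ Set.Ioo (0 : ℝ) 1 ∧ Irrational x ∧ ∀ n, cfa n x = a n := by
  obtain ⟨x, hx⟩ := IsCompact.nonempty_iInter_of_sequence_nonempty_isCompact_isClosed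
    (fun n => nest n a) (fun n => nest_anti n a ha) (fun n => nest_nonempty n a)
    (nest_compact 0 a ha) (fun n => (nest_compact n a ha).isClosed)
  have h : InNest a x := fun n => Set.mem_iInter.1 hx n
  refine ⟨x, ⟨inNest_pos ha h, inNest_lt ha h⟩, ?_, fun n => inNest_cfa n ha h⟩
  rintro ⟨r, hr⟩
  have hr0 : 0 < r := by
    have := inNest_pos ha h
    rw [← hr] at this; exact_mod_cast this
  refine inNest_not_rat r.den ha h r.num.toNat r.den_pos ?_
  rw [← hr, Rat.cast_def]
  congr 1
  have : ((r.num.toNat : ℤ)) = r.num := Int.toNat_of_nonneg (Rat.num_nonneg.2 hr0.le)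
  exact_mod_cast (congrArg (fun z : ℤ => (z : ℝ)) this).symm

lemma gaussMap_good {x : ℝ} (hx : x ∈ Set.Ioo (0 : ℝ) 1 ∧ Irrational x) :
    gaussMap x ∈ Set.Ioo (0 : ℝ) 1 ∧ Irrational (gaussMap x) := by
  have h : Irrational (gaussMap x) := by
    unfold gaussMap Int.fract
    exact (irrational_inv_iff.2 hx.2).sub_intCast _
  refine ⟨⟨lt_of_le_of_ne (Int.fract_nonneg _) ?_, Int.fract_lt_one _⟩, h⟩
  exact fun h0 => h.ne_zero h0.symm

lemma gaussMap_iter_good {x : ℝ} (hx : x ∈ Set.Ioo (0 : ℝ) 1 ∧ Irrational x) (n : ℕ) :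
    gaussMap^[n] x ∈ Set.Ioo (0 : ℝ) 1 ∧ Irrational (gaussMap^[n] x) := by
  induction n with
  | zero => exact hx
  | succ n ih => rw [Function.iterate_succ_apply']; exact gaussMap_good ih

lemma cfa_iter (j i : ℕ) (x : ℝ) : cfa i (gaussMap^[j] x) = cfa (j + i) x := by
  induction j generalizing x with
  | zero => simp
  | succ j ih =>
    rw [Function.iterate_succ_apply, ih, show j + 1 + i = (j + i) + 1 by ring]
    rfl

lemma cfa_pos {x : ℝ} (hx : x ∈ Set.Ioo (0 : ℝ) 1 ∧ Irrational x) (n : ℕ) : 0 < cfa n x := by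
  have := gaussMap_iter_good hx n
  rw [← Nat.add_zero n, ← cfa_iter]
  show 0 < ⌊(gaussMap^[n] x)⁻¹⌋₊
  rw [Nat.floor_pos]
  exact (one_le_inv₀ this.1.1).2 this.1.2.le

lemma measurable_gaussMap : Measurable gaussMap := by
  unfold gaussMap; exact measurable_inv.fract

lemma measurable_cfa (n : ℕ) : Measurable (cfa n) := by
  induction n with
  | zero => exact Nat.measurable_floor.comp measurable_inv
  | succ n ih => exact ih.comp measurable_gaussMap

lemma gauss_Icc {a b : ℝ} (ha : 0 ≤ a) (hab : a ≤ b) (hb : b ≤ 1) :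
    gaussMeasure (Set.Icc a b) =
      ENNReal.ofReal ((Real.log 2)⁻¹ * (Real.log (1 + b) - Real.log (1 + a))) := by
  unfold gaussMeasure
  rw [withDensity_apply _ measurableSet_Icc, Measure.restrict_congr_set (Ioo_ae_eq_Icc (a := (0:ℝ)) (b := 1)),
    Measure.restrict_restrict measurableSet_Icc,
    Set.inter_eq_left.2 (Set.Icc_subset_Icc ha hb)]
  have hcont : ContinuousOn (fun x : ℝ => (Real.log 2)⁻¹ * (1 + x)⁻¹) (Set.Icc a b) := by
    refine continuousOn_const.mul (ContinuousOn.inv₀ (by fun_prop) ?_)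
    intro x hx
    have := hx.1
    have : (0 : ℝ) < 1 + x := by linarith
    exact this.ne'
  rw [← ofReal_integral_eq_lintegral_ofReal hcont.integrableOn_Icc]
  · congr 1
    rw [integral_Icc_eq_integral_Ioc, ← intervalIntegral.integral_of_le hab,
      intervalIntegral.integral_const_mul]
    congr 1
    refine intervalIntegral.integral_eq_sub_of_hasDerivAt (f := fun x => Real.log (1 + x)) ?_ ?_
    · intro x hx
      rw [Set.uIcc_of_le hab] at hx
      have : (0 : ℝ) < 1 + x := by linarith [hx.1]
      have h := ((hasDerivAt_id x).const_add 1).log this.ne'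
      simpa using h
    · refine ContinuousOn.intervalIntegrable ?_
      rw [Set.uIcc_of_le hab]
      refine ContinuousOn.inv₀ (by fun_prop) ?_
      intro x hx
      have : (0 : ℝ) < 1 + x := by linarith [hx.1]
      exact this.ne'
  · rw [EventuallyLE, ae_restrict_iff' measurableSet_Icc]
    refine ae_of_all _ fun x hx => ?_
    have : (0 : ℝ) < 1 + x := by linarith [hx.1]
    have := Real.log_pos (one_lt_two)
    show (0 : ℝ) ≤ _
    positivity

lemma gauss_compl_Ioo : gaussMeasure (Set.Ioo (0 : ℝ) 1)ᶜ = 0 := by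
  unfold gaussMeasure
  rw [withDensity_apply _ measurableSet_Ioo.compl,
    Measure.restrict_restrict measurableSet_Ioo.compl]
  simp

lemma gauss_univ : gaussMeasure Set.univ = 1 := by
  have h1 : gaussMeasure (Set.Icc (0 : ℝ) 1)ᶜ = 0 :=
    measure_mono_null (Set.compl_subset_compl.2 Set.Ioo_subset_Icc_self) gauss_compl_Ioo
  have h2 := measure_add_measure_compl (μ := gaussMeasure) (measurableSet_Icc (a := (0:ℝ)) (b := 1))
  rw [h1, gauss_Icc le_rfl zero_le_one le_rfl] at h2
  rw [← h2]
  have := Real.log_pos (one_lt_two)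
  norm_num [this.ne']

instance gauss_prob : IsProbabilityMeasure gaussMeasure := ⟨gauss_univ⟩

lemma gauss_inter (s : Set ℝ) : gaussMeasure (s ∩ Set.Ioo 0 1) = gaussMeasure s :=
  measure_inter_conull gauss_compl_Ioo

lemma gauss_null_of_countable {s : Set ℝ} (hs : s.Countable) : gaussMeasure s = 0 := by
  unfold gaussMeasure
  exact withDensity_absolutelyContinuous _ _ (hs.measure_zero _)

lemma tele (t : ℝ) (ht0 : 0 ≤ t) :
    HasSum (fun k : ℕ => (Real.log 2)⁻¹ * (Real.log (1 + ((k : ℝ) + 1)⁻¹)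
      - Real.log (1 + ((k : ℝ) + 1 + t)⁻¹))) ((Real.log 2)⁻¹ * Real.log (1 + t)) := by
  have hl := Real.log_pos (one_lt_two)
  refine HasSum.mul_left _ ?_
  rw [hasSum_iff_tendsto_nat_of_nonneg]
  · let F : ℕ → ℝ := fun k => Real.log ((k : ℝ) + 1) - Real.log ((k : ℝ) + 1 + t)
    have hF : ∀ k : ℕ, Real.log (1 + ((k : ℝ) + 1)⁻¹) - Real.log (1 + ((k : ℝ) + 1 + t)⁻¹)
        = F (k + 1) - F k := by
      intro k
      have a1 : (0 : ℝ) < k + 1 := by positivity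
      have a2 : (0 : ℝ) < k + 1 + t := by positivity
      have e1 : 1 + ((k : ℝ) + 1)⁻¹ = ((k : ℝ) + 1 + 1) / (k + 1) := by field_simp
      have e2 : 1 + ((k : ℝ) + 1 + t)⁻¹ = ((k : ℝ) + 1 + 1 + t) / (k + 1 + t) := by
        field_simp; ring
      rw [e1, e2, Real.log_div (by positivity) (by positivity),
        Real.log_div (by positivity) (by positivity)]
      simp only [F]; push_cast; ring
    simp_rw [hF, Finset.sum_range_sub]
    have h0 : F 0 = - Real.log (1 + t) := by simp [F]
    rw [h0]
    have hlim : Tendsto F atTop (𝓝 0) := by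
      have e : ∀ k : ℕ, F k = - Real.log (1 + t * (1 / ((k : ℝ) + 1))) := by
        intro k
        have a1 : (0 : ℝ) < k + 1 := by positivity
        have e2 : 1 + t * (1 / ((k : ℝ) + 1)) = ((k : ℝ) + 1 + t) / (k + 1) := by
          field_simp
        rw [e2, Real.log_div (by positivity) (by positivity)]
        simp only [F]; ring
      have hc : Tendsto (fun k : ℕ => 1 + t * (1 / ((k : ℝ) + 1))) atTop (𝓝 1) := by
        have := (tendsto_one_div_add_atTop_nhds_zero_nat (𝕜 := ℝ)).const_mul t |>.const_add 1
        simpa using this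
      have := (hc.log one_ne_zero).neg
      rw [Real.log_one, neg_zero] at this
      exact this.congr fun k => (e k).symm
    simpa using hlim.sub_const (- Real.log (1 + t))
  · intro k
    rw [sub_nonneg]
    refine Real.log_le_log (by positivity) ?_
    exact add_le_add le_rfl (inv_anti₀ (by positivity) (by linarith))

lemma gauss_preimage {t : ℝ} (ht0 : 0 ≤ t) (ht1 : t < 1) :
    gaussMeasure (gaussMap ⁻¹' Set.Iic t) =
      ENNReal.ofReal ((Real.log 2)⁻¹ * Real.log (1 + t)) := by
  have hset : gaussMap ⁻¹' Set.Iic t ∩ Set.Ioo 0 1 =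
      (⋃ k : ℕ, Set.Icc ((k : ℝ) + 1 + t)⁻¹ ((k : ℝ) + 1)⁻¹) ∩ Set.Ioo 0 1 := by
    ext x
    simp only [Set.mem_inter_iff, Set.mem_preimage, Set.mem_Iic, Set.mem_iUnion, Set.mem_Icc]
    refine and_congr_left fun hx => ?_
    have hxi : 1 < x⁻¹ := (one_lt_inv₀ hx.1).2 hx.2
    constructor
    · intro h
      have hfl : 1 ≤ ⌊x⁻¹⌋ := Int.le_floor.2 (by exact_mod_cast hxi.le)
      have hk : (((⌊x⁻¹⌋ - 1).toNat : ℕ) : ℝ) + 1 = (⌊x⁻¹⌋ : ℝ) := by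
        have : (((⌊x⁻¹⌋ - 1).toNat : ℕ) : ℤ) = ⌊x⁻¹⌋ - 1 := Int.toNat_of_nonneg (by linarith)
        have := congrArg (fun z : ℤ => (z : ℝ)) this
        push_cast at this
        linarith
      refine ⟨(⌊x⁻¹⌋ - 1).toNat, ?_⟩
      rw [hk]
      have hfl' : (1 : ℝ) ≤ ⌊x⁻¹⌋ := by exact_mod_cast hfl
      have hfr := Int.floor_add_fract x⁻¹
      have hle := Int.floor_le x⁻¹
      unfold gaussMap at h
      constructor
      · rw [inv_le_comm₀ (by linarith) hx.1]; linarith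
      · rw [le_inv_comm₀ hx.1 (by linarith)]; exact hle
    · rintro ⟨k, h1, h2⟩
      have a1 : (0 : ℝ) < k + 1 := by positivity
      rw [inv_le_comm₀ (by linarith) hx.1] at h1
      rw [le_inv_comm₀ hx.1 (by linarith)] at h2
      have : gaussMap x = x⁻¹ - (k + 1) := by
        unfold gaussMap
        rw [Int.fract_eq_iff]
        exact ⟨by linarith, by linarith, (k + 1 : ℤ), by simp⟩
      rw [this]; linarith
  rw [← gauss_inter, hset, gauss_inter, measure_iUnion]
  · have hS := tele t ht0
    have hnn : ∀ k : ℕ, 0 ≤ (Real.log 2)⁻¹ * (Real.log (1 + ((k : ℝ) + 1)⁻¹)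
      - Real.log (1 + ((k : ℝ) + 1 + t)⁻¹)) := by
      intro k
      have hl := Real.log_pos (one_lt_two)
      refine mul_nonneg (by positivity) ?_
      rw [sub_nonneg]
      refine Real.log_le_log (by positivity) ?_
      exact add_le_add le_rfl (inv_anti₀ (by positivity) (by linarith))
    rw [← hS.tsum_eq, ENNReal.ofReal_tsum_of_nonneg hnn hS.summable]
    congr 1
    ext k
    refine gauss_Icc (by positivity) ?_ ?_
    · exact inv_anti₀ (by positivity) (by linarith)
    · refine inv_le_one_of_one_le₀ ?_
      have : (0 : ℝ) ≤ k := by positivity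
      linarith
  · have key : ∀ i j : ℕ, i < j → Disjoint (Set.Icc ((i : ℝ) + 1 + t)⁻¹ ((i : ℝ) + 1)⁻¹)
        (Set.Icc ((j : ℝ) + 1 + t)⁻¹ ((j : ℝ) + 1)⁻¹) := by
      intro i j hij
      rw [Set.disjoint_left]
      rintro x ⟨h1, _⟩ ⟨_, h2⟩
      have hij' : (i : ℝ) + 1 ≤ j := by exact_mod_cast hij
      have : ((j : ℝ) + 1)⁻¹ < ((i : ℝ) + 1 + t)⁻¹ := by
        exact inv_strictAnti₀ (by positivity) (by linarith)
      linarith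
    intro i j hij
    rcases lt_or_gt_of_ne hij with h | h
    · exact key i j h
    · exact (key j i h).symm
  · exact fun k => measurableSet_Icc

lemma gauss_mp : MeasurePreserving gaussMap gaussMeasure gaussMeasure := by
  refine ⟨measurable_gaussMap, ?_⟩
  have : IsProbabilityMeasure (Measure.map gaussMap gaussMeasure) :=
    Measure.isProbabilityMeasure_map measurable_gaussMap.aemeasurable
  refine Measure.ext_of_Iic _ _ fun t => ?_
  rw [Measure.map_apply measurable_gaussMap measurableSet_Iic]
  rcases lt_or_ge t 0 with h | h0
  · have e1 : gaussMap ⁻¹' Set.Iic t = ∅ := by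
      ext x
      simp only [Set.mem_preimage, Set.mem_Iic, Set.mem_empty_iff_false, iff_false, not_le]
      exact h.trans_le (Int.fract_nonneg _)
    have e2 : Set.Iic t ∩ Set.Ioo 0 1 = ∅ := by
      ext x
      simp only [Set.mem_inter_iff, Set.mem_Iic, Set.mem_Ioo, Set.mem_empty_iff_false, iff_false]
      intro hh; linarith [hh.1, hh.2.1]
    rw [e1, ← gauss_inter (Set.Iic t), e2]
  rcases lt_or_ge t 1 with h1 | h1
  · rw [gauss_preimage h0 h1]
    have e2 : Set.Iic t ∩ Set.Ioo 0 1 = Set.Icc 0 t ∩ Set.Ioo 0 1 := by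
      ext x
      simp only [Set.mem_inter_iff, Set.mem_Iic, Set.mem_Ioo, Set.mem_Icc]
      constructor
      · rintro ⟨a, b, c⟩; exact ⟨⟨b.le, a⟩, b, c⟩
      · rintro ⟨⟨_, a⟩, b⟩; exact ⟨a, b⟩
    rw [← gauss_inter (Set.Iic t), e2, gauss_inter, gauss_Icc le_rfl h0 h1.le]
    simp
  · have e1 : gaussMap ⁻¹' Set.Iic t = Set.univ := by
      ext x
      simp only [Set.mem_preimage, Set.mem_Iic, Set.mem_univ, iff_true]
      exact (Int.fract_lt_one _).le.trans h1
    have e2 : Set.Iic t ∩ Set.Ioo 0 1 = Set.univ ∩ Set.Ioo 0 1 := by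
      ext x
      simp only [Set.mem_inter_iff, Set.mem_Iic, Set.mem_Ioo, Set.mem_univ]
      constructor
      · rintro ⟨a, b, c⟩; exact ⟨trivial, b, c⟩
      · rintro ⟨a, b, c⟩; exact ⟨by linarith, b, c⟩
    rw [e1, ← gauss_inter (Set.Iic t), e2, gauss_inter]

lemma gauss_good_null : gaussMeasure {x : ℝ | x ∈ Set.Ioo (0 : ℝ) 1 ∧ Irrational x}ᶜ = 0 := by
  have : {x : ℝ | x ∈ Set.Ioo (0 : ℝ) 1 ∧ Irrational x}ᶜ ⊆
      (Set.Ioo (0 : ℝ) 1)ᶜ ∪ Set.range ((↑) : ℚ → ℝ) := by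
    intro x hx
    by_contra h
    simp only [Set.mem_union, not_or, Set.mem_compl_iff, not_not] at h
    exact hx ⟨h.1, h.2⟩
  refine measure_mono_null this (measure_union_null gauss_compl_Ioo ?_)
  exact gauss_null_of_countable (Set.countable_range _)

lemma measurableSet_cyl (m : ℕ) (d : Fin m → ℕ) :
    MeasurableSet {y : ℝ | y ∈ Set.Ioo (0 : ℝ) 1 ∧ Irrational y ∧
            ∀ i : Fin m, cfa (i : ℕ) y = d i} := by
  refine measurableSet_Ioo.inter (MeasurableSet.inter ?_ ?_)
  · exact (Set.countable_range ((↑) : ℚ → ℝ)).measurableSet.compl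
  · have : {y : ℝ | ∀ i : Fin m, cfa (i : ℕ) y = d i} =
      ⋂ i : Fin m, (cfa (i : ℕ)) ⁻¹' {d i} := by ext; simp
    change MeasurableSet {y : ℝ | ∀ i : Fin m, cfa (i : ℕ) y = d i}
    rw [this]
    exact MeasurableSet.iInter fun i => measurable_cfa _ (measurableSet_singleton _)

/-- Triangular numbers: the starting position of the `k`-th block, of length `k + 1`. -/
def tri (k : ℕ) : ℕ := ∑ i ∈ Finset.range k, (i + 1)

lemma tri_succ (k : ℕ) : tri (k + 1) = tri k + (k + 1) := Finset.sum_range_succ _ _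

/-- Block index and offset of the position `n`. -/
def st : ℕ → ℕ × ℕ
  | 0 => (0, 0)
  | n + 1 => if (st n).2 < (st n).1 then ((st n).1, (st n).2 + 1) else ((st n).1 + 1, 0)

lemma st_spec (n : ℕ) : n = tri (st n).1 + (st n).2 ∧ (st n).2 ≤ (st n).1 := by
  induction n with
  | zero => simp [st, tri]
  | succ n ih =>
    obtain ⟨h1, h2⟩ := ih
    by_cases h : (st n).2 < (st n).1
    · simp only [st, if_pos h]; omega
    · simp only [st, if_neg h]
      rw [tri_succ]
      omega

lemma st_tri (k : ℕ) : ∀ j, j ≤ k → st (tri k + j) = (k, j) := by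
  have aux : ∀ k, st (tri k) = (k, 0) → ∀ j, j ≤ k → st (tri k + j) = (k, j) := by
    intro k hk j
    induction j with
    | zero => intro _; simpa using hk
    | succ j ih =>
      intro hj
      have := ih (by omega)
      rw [← add_assoc]
      simp only [st, this]
      rw [if_pos (by omega)]
  apply aux
  induction k with
  | zero => simp [tri, st]
  | succ k ih =>
    have := aux k ih k le_rfl
    rw [tri_succ, ← add_assoc]
    simp only [st, this, lt_irrefl, if_false]

lemma tri_ge (k : ℕ) : (k : ℝ) ^ 2 / 2 ≤ tri k := by
  induction k with
  | zero => simp [tri]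
  | succ k ih => rw [tri_succ]; push_cast; nlinarith

lemma tri_le (k : ℕ) : tri k ≤ k ^ 2 := by
  induction k with
  | zero => simp [tri]
  | succ k ih => rw [tri_succ]; nlinarith

lemma st_tendsto : Tendsto (fun n => (st n).1) atTop atTop := by
  refine tendsto_atTop.2 fun b => ?_
  filter_upwards [eventually_ge_atTop (b ^ 2)] with n hn
  by_contra h
  push Not at h
  obtain ⟨h1, h2⟩ := st_spec n
  have h3 : n < tri ((st n).1 + 1) := by rw [tri_succ]; omega
  have h4 := tri_le ((st n).1 + 1)
  have h5 : ((st n).1 + 1) ^ 2 ≤ b ^ 2 := Nat.pow_le_pow_left h 2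
  omega

lemma sum_tri (f : ℕ → ℝ) (k : ℕ) : ∑ n ∈ Finset.range (tri k), f n =
    ∑ i ∈ Finset.range k, ∑ j ∈ Finset.range (i + 1), f (tri i + j) := by
  induction k with
  | zero => simp [tri]
  | succ k ih => rw [tri_succ, Finset.sum_range_add, ih]; exact (Finset.sum_range_succ (fun i => ∑ j ∈ Finset.range (i + 1), f (tri i + j)) k).symm

/-- Sums of two `[0,1]`-valued sequences agreeing except in the last `m` places. -/
lemma block_diff (f g : ℕ → ℝ) (m L : ℕ) (h : ∀ j, |f j - g j| ≤ 1)
    (hfg : ∀ j, j + m ≤ L → f j = g j) :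
    |∑ j ∈ Finset.range L, f j - ∑ j ∈ Finset.range L, g j| ≤ m := by
  rw [← Finset.sum_sub_distrib]
  refine (Finset.abs_sum_le_sum_abs _ _).trans ?_
  calc ∑ j ∈ Finset.range L, |f j - g j|
      ≤ ∑ j ∈ Finset.range L, (if L < j + m then (1 : ℝ) else 0) := by
        refine Finset.sum_le_sum fun j _ => ?_
        split_ifs with hj
        · exact h j
        · rw [hfg j (by omega)]; simp
    _ = (((Finset.range L).filter fun j => L < j + m).card : ℝ) := by
        rw [Finset.card_filter]; push_cast; rfl
    _ ≤ m := by
        have : (Finset.range L).filter (fun j => L < j + m) ⊆ Finset.Ico (L - m) L := by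
          intro j hj
          simp only [Finset.mem_filter, Finset.mem_range, Finset.mem_Ico] at *
          omega
        have := Finset.card_le_card this
        rw [Nat.card_Ico] at this
        exact_mod_cast this.trans (by omega)

lemma freq_tendsto (f : ℕ → ℝ) (p : ℝ) (hf : ∀ n, |f n - p| ≤ 1) (V : ℕ → ℝ) (m : ℕ) (C : ℝ)
    (hC : 0 ≤ C)
    (hV : ∀ i, |∑ j ∈ Finset.range (i + 1), (f (tri i + j) - p) - V i| ≤ m)
    (hVC : ∀ k : ℕ, (∑ i ∈ Finset.range k, V i) ^ 2 ≤ C * (k : ℝ) ^ 3) :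
    Tendsto (fun N : ℕ => (∑ n ∈ Finset.range N, f n) / N) atTop (𝓝 p) := by
  have key : ∀ N : ℕ, |∑ n ∈ Finset.range N, (f n - p)| ≤
      (m : ℝ) * (st N).1 + √(C * ((st N).1 : ℝ) ^ 3) + (st N).1 := by
    intro N
    obtain ⟨h1, h2⟩ := st_spec N
    set k := (st N).1
    set j := (st N).2
    have e : ∑ n ∈ Finset.range N, (f n - p) =
        (∑ i ∈ Finset.range k, (∑ j ∈ Finset.range (i + 1), (f (tri i + j) - p) - V i))
        + ∑ i ∈ Finset.range k, V i + ∑ l ∈ Finset.range j, (f (tri k + l) - p) := by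
      rw [h1, Finset.sum_range_add, sum_tri, ← Finset.sum_add_distrib]
      simp
    rw [e]
    refine (abs_add_three _ _ _).trans ?_
    refine add_le_add (add_le_add ?_ ?_) ?_
    · refine (Finset.abs_sum_le_sum_abs _ _).trans ((Finset.sum_le_sum fun i _ => hV i).trans ?_)
      simp [mul_comm]
    · exact Real.abs_le_sqrt (hVC k)
    · refine (Finset.abs_sum_le_sum_abs _ _).trans ((Finset.sum_le_sum fun i _ => hf _).trans ?_)
      simpa using h2
  have hlim : Tendsto (fun k : ℕ => 2 * ((m : ℝ) + 1) / k + 2 * √(C / k)) atTop (𝓝 0) := by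
    have h1 := tendsto_const_div_atTop_nhds_zero_nat (2 * ((m : ℝ) + 1))
    have h2 := ((tendsto_const_div_atTop_nhds_zero_nat C).sqrt).const_mul 2
    simpa using h1.add h2
  rw [tendsto_iff_norm_sub_tendsto_zero]
  refine tendsto_of_tendsto_of_tendsto_of_le_of_le' tendsto_const_nhds (hlim.comp st_tendsto)
    (Eventually.of_forall fun _ => norm_nonneg _) ?_
  filter_upwards [st_tendsto.eventually_ge_atTop 1] with N hk
  obtain ⟨h1, h2⟩ := st_spec N
  have hN : ((st N).1 : ℝ) ^ 2 / 2 ≤ N := by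
    refine (tri_ge _).trans ?_
    exact_mod_cast (by omega : tri (st N).1 ≤ N)
  have hkey := key N
  simp only [Function.comp]
  set k := (st N).1
  have hk' : (1 : ℝ) ≤ k := by exact_mod_cast hk
  have hN0 : (0 : ℝ) < N := by nlinarith
  have e1 : (∑ n ∈ Finset.range N, f n) / N - p = (∑ n ∈ Finset.range N, (f n - p)) / N := by
    rw [Finset.sum_sub_distrib]; simp; field_simp
  rw [e1, Real.norm_eq_abs, abs_div, abs_of_pos hN0, div_le_iff₀ hN0]
  have e2 : √(C * (k : ℝ) ^ 3) = √(C / k) * k ^ 2 := by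
    have : C * (k : ℝ) ^ 3 = (C / k) * (k ^ 2) ^ 2 := by field_simp
    rw [this, Real.sqrt_mul (by positivity), Real.sqrt_sq (by positivity)]
  have e3 : (2 * ((m : ℝ) + 1) / k + 2 * √(C / k)) * (k ^ 2 / 2)
      = m * k + √(C * (k : ℝ) ^ 3) + k := by
    rw [e2]; field_simp; ring
  refine hkey.trans ?_
  rw [← e3]
  exact mul_le_mul_of_nonneg_left hN (by positivity)

/-- The cylinder of a word. -/
def cyl (e : Σ m : ℕ, Fin m → ℕ) : Set ℝ := {y : ℝ | y ∈ Set.Ioo (0 : ℝ) 1 ∧ Irrational y ∧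
            ∀ i : Fin e.1, cfa (i : ℕ) y = e.2 i}

lemma measurableSet_cyl' (e : Σ m : ℕ, Fin m → ℕ) : MeasurableSet (cyl e) :=
  measurableSet_cyl e.1 e.2

/-- The centered indicator of a cylinder. -/
noncomputable def phi (e : Σ m : ℕ, Fin m → ℕ) (y : ℝ) : ℝ :=
  (cyl e).indicator 1 y - gaussMeasure.real (cyl e)

lemma measurable_phi (e : Σ m : ℕ, Fin m → ℕ) : Measurable (phi e) :=
  (measurable_one.indicator (measurableSet_cyl' e)).sub_const _

lemma abs_ind_sub_le (P : Prop) [Decidable P] (e : Σ m : ℕ, Fin m → ℕ) :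
    |(if P then (1 : ℝ) else 0) - gaussMeasure.real (cyl e)| ≤ 1 := by
  have h1 : gaussMeasure.real (cyl e) ≤ 1 := measureReal_le_one
  have h0 : 0 ≤ gaussMeasure.real (cyl e) := measureReal_nonneg
  rw [abs_le]
  split_ifs <;> constructor <;> linarith

lemma phi_eq (e : Σ m : ℕ, Fin m → ℕ) (y : ℝ) :
    phi e y = (if y ∈ cyl e then (1 : ℝ) else 0) - gaussMeasure.real (cyl e) := by
  simp [phi, Set.indicator_apply]

lemma integrable_phi (e : Σ m : ℕ, Fin m → ℕ) : Integrable (phi e) gaussMeasure := by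
  refine Integrable.of_bound (measurable_phi e).aestronglyMeasurable 1 (ae_of_all _ fun y => ?_)
  rw [phi_eq]; exact abs_ind_sub_le _ e

lemma integral_phi (e : Σ m : ℕ, Fin m → ℕ) : ∫ y, phi e y ∂gaussMeasure = 0 := by
  unfold phi
  rw [integral_sub, integral_indicator_one (measurableSet_cyl' e)]
  · simp
  · exact (integrable_const (1 : ℝ)).indicator (measurableSet_cyl' e)
  · exact integrable_const _

lemma integral_phi_iter (e : Σ m : ℕ, Fin m → ℕ) (j : ℕ) :
    ∫ y, phi e (gaussMap^[j] y) ∂gaussMeasure = 0 := by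
  have h := gauss_mp.iterate j
  rw [← integral_phi e]
  conv_rhs => rw [← h.map_eq]
  rw [integral_map h.measurable.aemeasurable (measurable_phi e).aestronglyMeasurable]


lemma integrable_phi_iter (e : Σ m : ℕ, Fin m → ℕ) (j : ℕ) :
    Integrable (fun y => phi e (gaussMap^[j] y)) gaussMeasure := by
  refine Integrable.of_bound
    ((measurable_phi e).comp (measurable_gaussMap.iterate j)).aestronglyMeasurable 1
    (ae_of_all _ fun y => ?_)
  rw [phi_eq]; exact abs_ind_sub_le _ e

/-- **Adler–Keane–Smorodinsky**: there exists an irrational `x ∈ (0,1)` that is normal for the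
continued fraction transformation: every finite word `d_1 … d_m` of positive integers occurs in
the sequence of partial quotients of `x` with frequency equal to the Gauss measure of the
cylinder `{y : a_1(y) = d_1, …, a_m(y) = d_m}`. -/
theorem exists_cf_normal_number :
    ∃ x : ℝ, x ∈ Set.Ioo (0 : ℝ) 1 ∧ Irrational x ∧
      ∀ m : ℕ, 0 < m → ∀ d : Fin m → ℕ, (∀ i, 0 < d i) →
        Tendsto
          (fun N : ℕ =>
            (((Finset.range N).filter fun n =>
              ∀ i : Fin m, cfa (n + (i : ℕ)) x = d i).card : ℝ) / N)
          atTop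
          (𝓝 ((gaussMeasure {y : ℝ | y ∈ Set.Ioo (0 : ℝ) 1 ∧ Irrational y ∧
            ∀ i : Fin m, cfa (i : ℕ) y = d i}).toReal)) := by
  obtain ⟨ω, hωG, hω⟩ := selection gaussMeasure
    {x : ℝ | x ∈ Set.Ioo (0 : ℝ) 1 ∧ Irrational x} gauss_good_null
    (fun (k : ℕ) (e : Σ m : ℕ, Fin m → ℕ) y => ∑ j ∈ Finset.range (k + 1), phi e (gaussMap^[j] y))
    (fun k e => Finset.measurable_sum _ fun j _ =>
      (measurable_phi e).comp (measurable_gaussMap.iterate j))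
    (fun k e y => by
      refine (Finset.abs_sum_le_sum_abs _ _).trans
        ((Finset.sum_le_sum fun j _ => ?_).trans (?_ : ∑ j ∈ Finset.range (k + 1), (1 : ℝ) ≤ _))
      · rw [phi_eq]; exact abs_ind_sub_le _ e
      · simp)
    (fun k e => by
      rw [integral_finsetSum]
      · exact Finset.sum_eq_zero fun j _ => integral_phi_iter e j
      · intro j _
        exact integrable_phi_iter e j)
  obtain ⟨x, hx, hirr, hdig⟩ := exists_of_digits (fun n => cfa (st n).2 (ω (st n).1))
    (fun n => cfa_pos (hωG _) _)
  refine ⟨x, hx, hirr, fun m hm d hd => ?_⟩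
  obtain ⟨C, hC, hVC⟩ := hω ⟨m, d⟩
  have hblock : ∀ k j, j ≤ k → cfa (tri k + j) x = cfa j (ω k) := by
    intro k j hj
    rw [hdig, st_tri k j hj]
  have main := freq_tendsto (fun n => if ∀ i : Fin m, cfa (n + (i : ℕ)) x = d i then (1 : ℝ) else 0)
    (gaussMeasure.real (cyl ⟨m, d⟩)) (fun n => abs_ind_sub_le _ _)
    (fun k => ∑ j ∈ Finset.range (k + 1), phi ⟨m, d⟩ (gaussMap^[j] (ω k))) m C hC ?_ hVC
  · refine main.congr fun N => ?_
    rw [Finset.card_filter]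
    push_cast
    rfl
  · intro k
    refine block_diff _ _ m (k + 1) (fun j => ?_) (fun j hj => ?_)
    · rw [phi_eq, sub_sub_sub_cancel_right]
      split_ifs <;> simp
    · rw [phi_eq]
      congr 1
      have hiff : (∀ i : Fin m, cfa (tri k + j + (i : ℕ)) x = d i) ↔
          gaussMap^[j] (ω k) ∈ cyl ⟨m, d⟩ := by
        have hg := gaussMap_iter_good (hωG k) j
        constructor
        · intro h
          refine ⟨hg.1, hg.2, fun i => ?_⟩
          have := h i
          rw [add_assoc, hblock k _ (by have : (i : ℕ) < m := i.2; omega)] at this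
          rw [cfa_iter]; exact this
        · rintro ⟨_, _, h⟩ i
          rw [add_assoc, hblock k _ (by have : (i : ℕ) < m := i.2; omega), ← cfa_iter]
          exact h i
      by_cases hP : gaussMap^[j] (ω k) ∈ cyl ⟨m, d⟩
      · rw [if_pos hP, if_pos (hiff.2 hP)]
      · rw [if_neg hP, if_neg (fun h => hP (hiff.1 h))]
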